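/- Let u, v_1, v_2, v_3 be formal Laurent series in q with integer coefficients, let l, γ_1, γ_2, γ_3 be integers, and suppose that for each k with l ≤ k ≤ l+6 there exist Laurent polynomials p_k^{(1)}, p_k^{(2)}, p_k^{(3)} ∈ ℤ[x, x^{−1}] of the form p_k^{(i)}(x) = ∑_n c_i(k,n)·7^{⌊(7n − k + γ_i)/4⌋}·x^n with integers c_i(k,n) (only finitely many nonzero), such that U_7(u·t^k) = v_1·p_k^{(1)}(t) + v_2·p_k^{(2)}(t) + v_3·p_k^{(3)}(t). Then for every integer k there exist Laurent polynomials p_k^{(1)}, p_k^{(2)}, p_k^{(3)} ∈ ℤ[x, x^{−1}] of the same form for which U_7(u·t^k) = v_1·p_k^{(1)}(t) + v_2·p_k^{(2)}(t) + v_3·p_k^{(3)}(t) holds. -/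

import Mathlib

noncomputable section

/-- `J b = ∏_{k=1}^∞ (1 - q^{b·k})` as a formal power series with integer coefficients. -/
def J (b : ℕ) : PowerSeries ℤ :=
  PowerSeries.mk fun n =>
    PowerSeries.coeff n
      (∏ k ∈ Finset.range (n + 1), (1 - (PowerSeries.X : PowerSeries ℤ) ^ (b * (k + 1))))

/-- Evaluation of a Laurent polynomial (given by its finitely supported coefficient
function `p : ℤ →₀ ℤ`) at the invertible Laurent series `T`. -/
def evalT (T : (LaurentSeries ℤ)ˣ) (p : ℤ →₀ ℤ) : LaurentSeries ℤ :=
  p.sum fun n c => c • ((T ^ n : (LaurentSeries ℤ)ˣ) : LaurentSeries ℤ)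

/-- `p` has the shape `∑_n c(n)·7^{⌊(7n−k+γ)/4⌋}·x^n` with integer `c(n)`
(the equation is read in ℚ, so that negative exponents of 7 are meaningful). -/
def HasForm (p : ℤ →₀ ℤ) (k γ : ℤ) : Prop :=
  ∀ n : ℤ, ∃ c : ℤ, (p n : ℚ) = (c : ℚ) * (7 : ℚ) ^ (⌊((7 * n - k + γ : ℤ) : ℚ) / 4⌋)

/-!
Write `s = t(q⁷)`. The series `t` and `s` satisfy the modular equation of degree seven
`t⁷ = s + ∑ aᵢ 49ᵐ tⁱ⁺ᵐ sᵐ⁺¹` over `0 < i + m < 7`, with `7 ^ ⌈i/4⌉ ∣ aᵢ`. As `U₇` is linear over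
series in `q⁷`, multiplying by `u tᵏ` and applying `U₇` gives a recurrence
`x (k + 7) = t x k + ∑ aᵢ 49ᵐ tᵐ⁺¹ x (k + i + m)` for `x k = U₇ (u tᵏ)`. The divisibility of the
coefficients is exactly what preserves the weights, and since `t` is a unit the recurrence can be
run in both directions from any seven consecutive values.

The modular equation comes from the 7-dissection `J₁ = A + B + C - e` by exponents mod 7, where
`e = q² J₄₉`. By Jacobi's identity the exponents of `J₁³` avoid the residues `2, 4, 5`, and the
residue `6` part is `-7 q⁶ J₄₉³`; this yields four cubic relations between `A`, `B`, `C`, `e`. They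
make the quartic `Y = A³B + B³C + C³A + 8e⁴` a root of a quadratic with coefficients in `J₁` and
`e`. The product of `J₁(ζq)` over seventh roots of unity `ζ` is `J₇⁸ / J₄₉`, and comparing it with
the same product computed from the dissection gives `Y² = (q J₇⁴)²`, hence `Y = -q J₇⁴ = -t J₁⁴`.
Eliminating `e / J₁`, whose fourth power is `s t`, leaves the modular equation.
-/

open Finset PowerSeries

section GaussBinom

variable {R : Type*} [CommRing R]

/-- The Gaussian binomial coefficient `[n choose k]` at an arbitrary ring element `q`. It is defined
by the `q`-Pascal rule, so that no division is involved, and it vanishes for `n < k`. -/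
def gaussBinom (q : R) : ℕ → ℕ → R
  | _, 0 => 1
  | 0, _ + 1 => 0
  | n + 1, k + 1 => gaussBinom q n k + q ^ (k + 1) * gaussBinom q n (k + 1)

/-- The truncated Euler product `(1 - q)(1 - q²)⋯(1 - qⁿ)`, whose limit at `q = X ^ b` is `J b`. -/
def eulerProd (q : R) (n : ℕ) : R :=
  ∏ k ∈ range n, (1 - q ^ (k + 1))

theorem eulerProd_succ (q : R) (n : ℕ) :
    eulerProd q (n + 1) = eulerProd q n * (1 - q ^ (n + 1)) :=
  prod_range_succ ..

theorem map_eulerProd {S : Type*} [CommRing S] (f : R →+* S) (q : R) (n : ℕ) :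
    f (eulerProd q n) = eulerProd (f q) n := by
  simp [eulerProd]

@[simp]
theorem gaussBinom_zero_right (q : R) (n : ℕ) : gaussBinom q n 0 = 1 := by
  cases n <;> rfl

theorem gaussBinom_succ_succ (q : R) (n k : ℕ) : gaussBinom q (n + 1) (k + 1) =
    gaussBinom q n k + q ^ (k + 1) * gaussBinom q n (k + 1) :=
  rfl

theorem gaussBinom_eq_zero_of_lt (q : R) {n k : ℕ} (h : n < k) : gaussBinom q n k = 0 := by
  induction n generalizing k with
  | zero => obtain ⟨k, rfl⟩ := Nat.exists_eq_succ_of_ne_zero h.ne'; rfl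
  | succ n ih =>
    obtain ⟨k, rfl⟩ := Nat.exists_eq_succ_of_ne_zero (Nat.ne_zero_of_lt h)
    rw [gaussBinom_succ_succ, ih (by lia), ih (by lia), mul_zero, add_zero]

@[simp]
theorem gaussBinom_self (q : R) (n : ℕ) : gaussBinom q n n = 1 := by
  induction n with
  | zero => rfl
  | succ n ih =>
    rw [gaussBinom_succ_succ, ih, gaussBinom_eq_zero_of_lt q n.lt_succ_self, mul_zero, add_zero]

theorem one_sub_pow_mul_gaussBinom_succ (q : R) (k d : ℕ) :
    (1 - q ^ (k + 1)) * gaussBinom q (k + d) (k + 1) = (1 - q ^ d) * gaussBinom q (k + d) k := by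
  induction d generalizing k with
  | zero => simp [gaussBinom_eq_zero_of_lt]
  | succ d ihd =>
    induction k with
    | zero =>
      have h := ihd 0
      rw [← add_assoc, gaussBinom_succ_succ]
      simp only [zero_add, gaussBinom_zero_right] at h ⊢
      linear_combination q * h
    | succ k ihk =>
      have h := ihd (k + 1)
      rw [show k + 1 + d = k + (d + 1) by ring] at h
      rw [show k + 1 + (d + 1) = k + (d + 1) + 1 by ring, gaussBinom_succ_succ,
        gaussBinom_succ_succ]
      linear_combination q ^ (k + 2) * h + ihk

theorem gaussBinom_succ_succ' (q : R) (k d : ℕ) : gaussBinom q (k + d + 1) (k + 1) =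
    q ^ d * gaussBinom q (k + d) k + gaussBinom q (k + d) (k + 1) := by
  rw [gaussBinom_succ_succ]
  linear_combination -one_sub_pow_mul_gaussBinom_succ q k d

theorem gaussBinom_add_two (q : R) (k d : ℕ) : gaussBinom q (k + d + 2) (k + 2) =
    q ^ d * gaussBinom q (k + d) k + (1 + q ^ (k + d + 1)) * gaussBinom q (k + d) (k + 1) +
      q ^ (k + 2) * gaussBinom q (k + d) (k + 2) := by
  rw [gaussBinom_succ_succ, gaussBinom_succ_succ']
  cases d with
  | zero => simp [gaussBinom_eq_zero_of_lt]
  | succ d =>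
    have h := gaussBinom_succ_succ' q (k + 1) d
    rw [show k + 1 + d = k + (d + 1) by ring] at h
    rw [h]
    ring

theorem gaussBinom_symm_add (q : R) (i j : ℕ) :
    gaussBinom q (i + j) i = gaussBinom q (i + j) j := by
  induction i generalizing j with
  | zero => simp
  | succ i ihi =>
    induction j with
    | zero => simp
    | succ j ihj =>
      have h := gaussBinom_succ_succ' q j (i + 1)
      rw [show j + (i + 1) = i + 1 + j by ring] at h
      rw [← add_assoc, gaussBinom_succ_succ, h, ihj, show i + 1 + j = i + (j + 1) by ring, ihi]
      ring

theorem gaussBinom_mul_eulerProd_mul_eulerProd (q : R) (i j : ℕ) :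
    gaussBinom q (i + j) i * eulerProd q i * eulerProd q j = eulerProd q (i + j) := by
  induction i generalizing j with
  | zero => simp [eulerProd]
  | succ i ihi =>
    induction j with
    | zero => simp [eulerProd]
    | succ j ihj =>
      have h := ihi (j + 1)
      rw [show i + (j + 1) = i + 1 + j by ring] at h
      rw [← add_assoc, gaussBinom_succ_succ, eulerProd_succ q (i + 1 + j)]
      simp only [eulerProd_succ q i, eulerProd_succ q j] at h ihj ⊢
      linear_combination (1 - q ^ (i + 1)) * h + q ^ (i + 1) * (1 - q ^ (j + 1)) * ihj

/-- The `j`-th term of the finite form `∑ⱼ (2j + 1) a(n, j) = ((1 - q)⋯(1 - qⁿ))²` of Jacobi's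
identity. -/
def jacobiTerm (q : R) (n j : ℕ) : R :=
  (-1) ^ j * q ^ (j * (j + 1) / 2) * gaussBinom q (2 * n + 1) (n + 1 + j)

theorem jacobiTerm_eq_zero (q : R) {n j : ℕ} (h : n < j) : jacobiTerm q n j = 0 := by
  rw [jacobiTerm, gaussBinom_eq_zero_of_lt q (by lia), mul_zero]

theorem triangle_succ (j : ℕ) : (j + 1) * (j + 1 + 1) / 2 = j * (j + 1) / 2 + (j + 1) := by
  rw [show (j + 1) * (j + 1 + 1) = j * (j + 1) + (j + 1) * 2 by ring,
    Nat.add_mul_div_right _ _ two_pos]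

theorem jacobiTerm_succ_zero (q : R) (n : ℕ) : jacobiTerm q (n + 1) 0 =
    (1 + (q ^ (n + 1)) ^ 2) * jacobiTerm q n 0 +
      q ^ (n + 1) * (jacobiTerm q n 0 - jacobiTerm q n 1) := by
  have h := gaussBinom_add_two q n (n + 1)
  rw [gaussBinom_symm_add q n (n + 1)] at h
  simp only [jacobiTerm, show 2 * (n + 1) + 1 = n + (n + 1) + 2 by ring,
    show 2 * n + 1 = n + (n + 1) by ring, h, triangle_succ]
  ring

theorem jacobiTerm_succ_succ (q : R) (n j : ℕ) : jacobiTerm q (n + 1) (j + 1) =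
    (1 + (q ^ (n + 1)) ^ 2) * jacobiTerm q n (j + 1) -
      q ^ (n + 1) * (jacobiTerm q n j + jacobiTerm q n (j + 2)) := by
  rcases lt_or_ge n j with hj | hj
  · simp only [jacobiTerm_eq_zero q hj, jacobiTerm_eq_zero q (hj.trans j.lt_succ_self),
      jacobiTerm_eq_zero q (hj.trans (Nat.lt_add_of_pos_right two_pos)),
      jacobiTerm_eq_zero q (Nat.succ_lt_succ hj), mul_zero, add_zero, sub_zero]
  obtain ⟨d, rfl⟩ := Nat.exists_eq_add_of_le hj
  have h := gaussBinom_add_two q (j + d + 1 + j) d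
  simp only [jacobiTerm, show 2 * (j + d + 1) + 1 = j + d + 1 + j + d + 2 by ring,
    show 2 * (j + d) + 1 = j + d + 1 + j + d by ring,
    show j + d + 1 + 1 + (j + 1) = j + d + 1 + j + 2 by ring, h, triangle_succ, ← add_assoc]
  ring

theorem sum_odd_mul_of_recurrence (Q : R) {a b : ℕ → R}
    (h₀ : b 0 = (1 + Q ^ 2) * a 0 + Q * (a 0 - a 1))
    (h : ∀ j, b (j + 1) = (1 + Q ^ 2) * a (j + 1) - Q * (a j + a (j + 2))) (M : ℕ) :
    ∑ j ∈ range (M + 1), (2 * (j : R) + 1) * b j =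
      (1 - Q) ^ 2 * ∑ j ∈ range (M + 1), (2 * (j : R) + 1) * a j +
        Q * ((2 * (M : R) + 3) * a M - (2 * (M : R) + 1) * a (M + 1)) := by
  induction M with
  | zero => simp only [zero_add, sum_range_one, Nat.cast_zero, h₀]; ring
  | succ M ih =>
    rw [sum_range_succ, ih, sum_range_succ _ (M + 1), h]
    push_cast
    ring

theorem sum_odd_mul_jacobiTerm (q : R) {n M : ℕ} (h : n ≤ M) :
    ∑ j ∈ range (M + 1), (2 * (j : R) + 1) * jacobiTerm q n j = eulerProd q n ^ 2 := by
  induction n with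
  | zero =>
    rw [sum_range_succ', sum_eq_zero fun j _ => by rw [jacobiTerm_eq_zero q j.succ_pos, mul_zero]]
    simp [jacobiTerm, eulerProd]
  | succ n ih =>
    rw [sum_odd_mul_of_recurrence (q ^ (n + 1)) (jacobiTerm_succ_zero q n)
      (jacobiTerm_succ_succ q n), ih (by lia), jacobiTerm_eq_zero q h,
      jacobiTerm_eq_zero q (by lia : n < M + 1), eulerProd_succ]
    ring

end GaussBinom

section Truncation

variable {R : Type*} [CommRing R]

theorem smodEq_span_X_pow_iff {f g : R⟦X⟧} {d : ℕ} :
    f ≡ g [SMOD Ideal.span {(X : R⟦X⟧) ^ d}] ↔ ∀ k < d, coeff k f = coeff k g := by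
  simp only [SModEq.sub_mem, Ideal.mem_span_singleton, X_pow_dvd_iff, map_sub, sub_eq_zero]

theorem eq_of_forall_smodEq_X_pow {f g : R⟦X⟧}
    (h : ∀ d, f ≡ g [SMOD Ideal.span {(X : R⟦X⟧) ^ d}]) : f = g := by
  ext k
  exact smodEq_span_X_pow_iff.1 (h (k + 1)) k k.lt_succ_self

theorem map_smodEq_X_pow {S : Type*} [CommRing S] (φ : R →+* S) {f g : R⟦X⟧} {d : ℕ}
    (h : f ≡ g [SMOD Ideal.span {(X : R⟦X⟧) ^ d}]) :
    PowerSeries.map φ f ≡ PowerSeries.map φ g [SMOD Ideal.span {(X : S⟦X⟧) ^ d}] := by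
  rw [smodEq_span_X_pow_iff] at h ⊢
  intro k hk
  rw [coeff_map, coeff_map, h k hk]

theorem rescale_smodEq_X_pow (a : R) {f g : R⟦X⟧} {d : ℕ}
    (h : f ≡ g [SMOD Ideal.span {(X : R⟦X⟧) ^ d}]) :
    rescale a f ≡ rescale a g [SMOD Ideal.span {(X : R⟦X⟧) ^ d}] := by
  rw [smodEq_span_X_pow_iff] at h ⊢
  intro k hk
  rw [coeff_rescale, coeff_rescale, h k hk]

end Truncation

section EulerProduct

theorem coeff_eulerProd_X_pow {b d n : ℕ} (hb : b ≠ 0) (h : d ≤ n) :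
    coeff d (eulerProd ((X : ℤ⟦X⟧) ^ b) n) = coeff d (J b) := by
  have hJ : coeff d (J b) = coeff d (eulerProd ((X : ℤ⟦X⟧) ^ b) (d + 1)) := by
    simp only [J, eulerProd, coeff_mk, pow_mul]
  have step {m : ℕ} (hm : d ≤ m) : coeff d (eulerProd ((X : ℤ⟦X⟧) ^ b) (m + 1)) =
      coeff d (eulerProd ((X : ℤ⟦X⟧) ^ b) m) := by
    have : m + 1 ≤ b * (m + 1) := Nat.le_mul_of_pos_left _ (Nat.pos_of_ne_zero hb)
    rw [eulerProd_succ, mul_sub, mul_one, map_sub, ← pow_mul, coeff_mul_X_pow', if_neg (by lia),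
      sub_zero]
  rw [hJ, step le_rfl]
  induction n, h using Nat.le_induction with
  | base => rfl
  | succ m hm ih => rw [step hm, ih]

theorem eulerProd_X_pow_smodEq_J {b d n : ℕ} (hb : b ≠ 0) (h : d ≤ n) :
    eulerProd ((X : ℤ⟦X⟧) ^ b) n ≡ J b [SMOD Ideal.span {(X : ℤ⟦X⟧) ^ d}] :=
  smodEq_span_X_pow_iff.2 fun _ hk => coeff_eulerProd_X_pow hb (hk.le.trans h)

theorem constantCoeff_J {b : ℕ} (hb : b ≠ 0) : constantCoeff (J b) = 1 := by
  rw [← coeff_zero_eq_constantCoeff_apply, ← coeff_eulerProd_X_pow hb le_rfl]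
  simp [eulerProd]

theorem J_ne_zero {b : ℕ} (hb : b ≠ 0) : J b ≠ 0 := fun h => by
  simpa [h] using constantCoeff_J hb

theorem J_one_eq_pentagonalSeries : J 1 = pentagonalSeries ℤ := by
  ext d
  obtain ⟨s, hs⟩ := Filter.eventually_atTop.1 (coeff_prod_one_sub_X_pow_eventually_eq ℤ d)
  obtain ⟨N, hN⟩ := s.exists_nat_subset_range
  rw [← hs (range (max N d)) (hN.trans (range_subset_range.2 (le_max_left _ _))),
    ← coeff_eulerProd_X_pow one_ne_zero (le_max_right N d), pow_one, eulerProd]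

theorem expand_J {a b : ℕ} (ha : a ≠ 0) (hb : b ≠ 0) : expand a ha (J b) = J (a * b) := by
  have hprod (n : ℕ) : expand a ha (eulerProd ((X : ℤ⟦X⟧) ^ b) n) =
      eulerProd ((X : ℤ⟦X⟧) ^ (a * b)) n := by
    simp only [eulerProd, map_prod, map_sub, map_one, map_pow, expand_X, pow_mul]
  ext n
  rw [← coeff_eulerProd_X_pow (mul_ne_zero ha hb) le_rfl, ← hprod, coeff_expand, coeff_expand]
  split_ifs with h
  · rw [coeff_eulerProd_X_pow hb (Nat.div_le_self n a)]
  · rfl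

end EulerProduct

section JacobiIdentity

theorem gaussBinom_X_mul_J_one_smodEq {d i j : ℕ} (hi : d ≤ i) (hj : d ≤ j) :
    gaussBinom (X : ℤ⟦X⟧) (i + j) i * J 1 ≡ 1 [SMOD Ideal.span {(X : ℤ⟦X⟧) ^ d}] := by
  have hunit : IsUnit (J 1) := by
    rw [isUnit_iff_constantCoeff, constantCoeff_J one_ne_zero]
    exact isUnit_one
  have hP {n : ℕ} (hn : d ≤ n) := eulerProd_X_pow_smodEq_J one_ne_zero hn
  rw [pow_one] at hP
  have h := (((SModEq.refl (gaussBinom (X : ℤ⟦X⟧) (i + j) i)).mul (hP hi)).mul (hP hj)).symm.trans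
    (gaussBinom_mul_eulerProd_mul_eulerProd (X : ℤ⟦X⟧) i j ▸ hP (le_add_right hi))
  rw [SModEq.sub_mem] at h ⊢
  rw [← Ideal.mul_unit_mem_iff_mem _ hunit, sub_one_mul]
  exact h

theorem le_triangle (j : ℕ) : j ≤ j * (j + 1) / 2 := by
  cases j with
  | zero => rfl
  | succ j => exact triangle_succ j ▸ Nat.le_add_left ..

theorem J_one_mul_jacobiTerm_smodEq {d n : ℕ} (h : 2 * d ≤ n) (j : ℕ) :
    J 1 * jacobiTerm (X : ℤ⟦X⟧) n j ≡ (-1) ^ j * X ^ (j * (j + 1) / 2)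
      [SMOD Ideal.span {(X : ℤ⟦X⟧) ^ d}] := by
  have hterm : J 1 * jacobiTerm (X : ℤ⟦X⟧) n j =
      (-1) ^ j * X ^ (j * (j + 1) / 2) * (gaussBinom X (2 * n + 1) (n + 1 + j) * J 1) := by
    rw [jacobiTerm]; ring
  rcases le_or_gt d (j * (j + 1) / 2) with hd | hd
  · have hX : X ^ (j * (j + 1) / 2) ∈ Ideal.span {(X : ℤ⟦X⟧) ^ d} :=
      Ideal.mem_span_singleton.2 (pow_dvd_pow X hd)
    rw [hterm, SModEq.sub_mem, ← mul_sub_one]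
    exact Ideal.mul_mem_right _ _ (Ideal.mul_mem_left _ _ hX)
  · have hj := le_triangle j
    rw [hterm, show 2 * n + 1 = n + 1 + j + (n - j) by lia]
    simpa only [mul_one] using (SModEq.refl ((-1) ^ j * X ^ (j * (j + 1) / 2))).mul
      (gaussBinom_X_mul_J_one_smodEq (by lia : d ≤ n + 1 + j) (by lia : d ≤ n - j))

theorem J_one_cube_smodEq (d : ℕ) :
    J 1 ^ 3 ≡ ∑ j ∈ range (2 * d + 1), (2 * (j : ℤ⟦X⟧) + 1) * ((-1) ^ j * X ^ (j * (j + 1) / 2))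
      [SMOD Ideal.span {(X : ℤ⟦X⟧) ^ d}] := by
  have hP := eulerProd_X_pow_smodEq_J one_ne_zero (by lia : d ≤ 2 * d)
  rw [pow_one] at hP
  have hcube : J 1 ^ 3 ≡ J 1 * eulerProd X (2 * d) ^ 2 [SMOD Ideal.span {(X : ℤ⟦X⟧) ^ d}] := by
    rw [pow_succ']
    exact (SModEq.refl (J 1)).mul (hP.symm.pow 2)
  refine hcube.trans ?_
  rw [← sum_odd_mul_jacobiTerm X le_rfl, mul_sum]
  refine SModEq.sum fun j _ => ?_
  rw [mul_left_comm]
  exact SModEq.rfl.mul (J_one_mul_jacobiTerm_smodEq le_rfl j)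

theorem coeff_J_one_cube (d : ℕ) : coeff d (J 1 ^ 3) =
    ∑ j ∈ range (2 * (d + 1) + 1),
      if d = j * (j + 1) / 2 then (-1) ^ j * (2 * (j : ℤ) + 1) else 0 := by
  rw [smodEq_span_X_pow_iff.1 (J_one_cube_smodEq (d + 1)) d d.lt_succ_self, map_sum]
  refine sum_congr rfl fun j _ => ?_
  have hterm : (2 * (j : ℤ⟦X⟧) + 1) * ((-1) ^ j * X ^ (j * (j + 1) / 2)) =
      C ((-1) ^ j * (2 * (j : ℤ) + 1)) * X ^ (j * (j + 1) / 2) := by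
    simp only [map_mul, map_pow, map_neg, map_one, map_add, map_ofNat, map_natCast]
    ring
  rw [hterm, coeff_C_mul, coeff_X_pow, mul_ite, mul_one, mul_zero]

theorem coeff_J_one_cube_eq_zero {d : ℕ} (h : ∀ j, j * (j + 1) / 2 ≠ d) :
    coeff d (J 1 ^ 3) = 0 := by
  rw [coeff_J_one_cube]
  exact sum_eq_zero fun j _ => if_neg (h j).symm

theorem coeff_triangle_J_one_cube (i : ℕ) :
    coeff (i * (i + 1) / 2) (J 1 ^ 3) = (-1) ^ i * (2 * (i : ℤ) + 1) := by
  have hmono : StrictMono fun j : ℕ => j * (j + 1) / 2 :=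
    strictMono_nat_of_lt_succ fun j => by rw [triangle_succ]; lia
  have hi := le_triangle i
  rw [coeff_J_one_cube, sum_eq_single_of_mem i (mem_range.2 (by lia)), if_pos rfl]
  exact fun j _ hj => if_neg fun h => hj (hmono.injective h).symm

end JacobiIdentity

section ResiduePart

variable {R : Type*} [CommRing R] {m : ℕ}

/-- The power series all of whose exponents lie in the residue class `r` modulo `m`. -/
def supportedMod (r : ZMod m) : Submodule R R⟦X⟧ where
  carrier := {f | ∀ n : ℕ, (n : ZMod m) ≠ r → coeff n f = 0}
  add_mem' hf hg n hn := by rw [map_add, hf n hn, hg n hn, add_zero]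
  zero_mem' n _ := map_zero (coeff n)
  smul_mem' c f hf n hn := by rw [map_smul, hf n hn, smul_zero]

instance supportedMod.gradedMonoid :
    SetLike.GradedMonoid (supportedMod : ZMod m → Submodule R R⟦X⟧) where
  one_mem n hn := by
    rw [coeff_one, if_neg]
    rintro rfl
    exact hn Nat.cast_zero
  mul_mem r s f g hf hg n hn := by
    rw [coeff_mul]
    refine sum_eq_zero fun ⟨i, j⟩ hij => ?_
    rw [HasAntidiagonal.mem_antidiagonal] at hij
    dsimp only at hij ⊢
    by_cases hi : (i : ZMod m) = r
    · rw [hg j fun hj => hn (by rw [← hij, Nat.cast_add, hi, hj]), mul_zero]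
    · rw [hf i hi, zero_mul]

theorem map_mem_supportedMod {S : Type*} [CommRing S] (φ : R →+* S) {r : ZMod m} {f : R⟦X⟧}
    (hf : f ∈ supportedMod r) : PowerSeries.map φ f ∈ supportedMod r := fun n hn => by
  rw [coeff_map, hf n hn, map_zero]

theorem rescale_of_mem_supportedMod {r : ℕ} {f : R⟦X⟧} (hf : f ∈ supportedMod (r : ZMod m))
    {z : R} (hz : z ^ m = 1) : rescale z f = C z ^ r * f := by
  ext n
  rw [coeff_rescale, ← map_pow, coeff_C_mul]
  by_cases hn : (n : ZMod m) = r
  · rw [pow_eq_pow_mod n hz, pow_eq_pow_mod r hz, (ZMod.natCast_eq_natCast_iff' n r m).1 hn]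
  · rw [hf n hn, mul_zero, mul_zero]

/-- The part of a power series with exponents in the residue class `r` modulo `m`. -/
def residuePart (r : ZMod m) : R⟦X⟧ →ₗ[R] R⟦X⟧ where
  toFun f := mk fun n => if (n : ZMod m) = r then coeff n f else 0
  map_add' f g := by ext n; simp only [coeff_mk, map_add]; split_ifs <;> simp
  map_smul' c f := by ext n; simp

theorem coeff_residuePart (r : ZMod m) (f : R⟦X⟧) (n : ℕ) :
    coeff n (residuePart r f) = if (n : ZMod m) = r then coeff n f else 0 := by
  simp [residuePart]

theorem residuePart_mem_supportedMod (r : ZMod m) (f : R⟦X⟧) :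
    residuePart r f ∈ supportedMod r := fun n hn => by
  rw [coeff_residuePart, if_neg hn]

theorem sum_residuePart [NeZero m] (f : R⟦X⟧) : ∑ r : ZMod m, residuePart r f = f := by
  ext n
  simp [map_sum, coeff_residuePart]

theorem residuePart_of_mem_supportedMod {r s : ZMod m} {f : R⟦X⟧} (hf : f ∈ supportedMod s) :
    residuePart r f = if s = r then f else 0 := by
  ext n
  rw [coeff_residuePart]
  by_cases hn : (n : ZMod m) = s
  · rw [hn]
    split_ifs <;> simp
  · split_ifs <;> simp [hf n hn]

variable {ι : Type*} {φ : ι → ℕ} {f : R⟦X⟧} {r : ZMod m}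

theorem residuePart_eq_zero_of_forall_ne (hf : ∀ n ∉ Set.range φ, coeff n f = 0)
    (hr : ∀ j, (φ j : ZMod m) ≠ r) : residuePart r f = 0 := by
  ext n
  rw [coeff_residuePart, map_zero, ite_eq_right_iff]
  rintro rfl
  exact hf n fun ⟨j, hj⟩ => hr j (congrArg _ hj)

theorem residuePart_eq_smul_X_pow_mul_expand {σ : ι → ι} {N d : ℕ} {κ : R} (hN : N ≠ 0)
    (hmN : m ∣ N) (hd : (d : ZMod m) = r) (hf : ∀ n ∉ Set.range φ, coeff n f = 0)
    (hr : ∀ j, (φ j : ZMod m) = r → j ∈ Set.range σ) (hσ : ∀ i, φ (σ i) = N * φ i + d)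
    (hκ : ∀ i, coeff (φ (σ i)) f = κ * coeff (φ i) f) :
    residuePart r f = κ • (X ^ d * expand N hN f) := by
  ext n
  rw [coeff_residuePart, map_smul, coeff_X_pow_mul', coeff_expand, smul_eq_mul]
  by_cases hn : ∃ i, φ (σ i) = n
  · obtain ⟨i, rfl⟩ := hn
    have hclass : (φ (σ i) : ZMod m) = r := by
      rw [hσ, Nat.cast_add, Nat.cast_mul, (ZMod.natCast_eq_zero_iff N m).2 hmN, zero_mul, zero_add,
        hd]
    rw [if_pos hclass, hκ, hσ, if_pos (Nat.le_add_left ..), Nat.add_sub_cancel,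
      if_pos (dvd_mul_right ..), Nat.mul_div_cancel_left _ (Nat.pos_of_ne_zero hN)]
  · have hleft : (n : ZMod m) = r → coeff n f = 0 := by
      rintro rfl
      refine hf n fun ⟨j, hj⟩ => ?_
      obtain ⟨i, rfl⟩ := hr j (congrArg _ hj)
      exact hn ⟨i, hj⟩
    have hright (hdn : d ≤ n) (hNn : N ∣ n - d) : coeff ((n - d) / N) f = 0 := by
      refine hf _ fun ⟨i, hi⟩ => hn ⟨i, ?_⟩
      rw [hσ, hi, Nat.mul_div_cancel' hNn, Nat.sub_add_cancel hdn]
    split_ifs <;> simp_all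

end ResiduePart

section Dissection

theorem natCast_pentagonal_zmod_seven (k : ℤ) :
    ((pentagonal k : ℕ) : ZMod 7) = 4 * (k : ZMod 7) * (3 * k - 1) := by
  have h := congrArg (Int.cast (R := ZMod 7)) (two_mul_natCast_pentagonal k)
  push_cast at h
  linear_combination 4 * h - (pentagonal k : ZMod 7) * (by decide : (7 : ZMod 7) = 0)

theorem pentagonal_seven_mul_sub_one (k : ℤ) : pentagonal (7 * k - 1) = 49 * pentagonal k + 2 := by
  zify
  linarith [two_mul_natCast_pentagonal (7 * k - 1), two_mul_natCast_pentagonal k]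

theorem coeff_J_one_eq_zero {n : ℕ} (h : n ∉ Set.range pentagonal) : coeff n (J 1) = 0 := by
  rw [J_one_eq_pentagonalSeries, coeff_pentagonalSeries_eq_zero ℤ h]

theorem coeff_pentagonal_J_one (k : ℤ) : coeff (pentagonal k) (J 1) = k.negOnePow := by
  rw [J_one_eq_pentagonalSeries, coeff_pentagonalSeries_pentagonal, Int.cast_id]

theorem residuePart_J_one_eq_zero {r : ZMod 7} (hr : ∀ x : ZMod 7, 4 * x * (3 * x - 1) ≠ r) :
    residuePart r (J 1) = 0 :=
  residuePart_eq_zero_of_forall_ne (fun _ => coeff_J_one_eq_zero)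
    fun k => natCast_pentagonal_zmod_seven k ▸ hr k

theorem residuePart_two_J_one : residuePart (2 : ZMod 7) (J 1) = -(X ^ 2 * J 49) := by
  have hrange (k : ℤ) (hk : ((pentagonal k : ℕ) : ZMod 7) = 2) :
      k ∈ Set.range fun i : ℤ => 7 * i - 1 := by
    have hclass : ∀ x : ZMod 7, 4 * x * (3 * x - 1) = 2 → x + 1 = 0 := by decide
    have hk' : ((k + 1 : ℤ) : ZMod 7) = 0 := by
      rw [Int.cast_add, Int.cast_one]
      exact hclass _ (natCast_pentagonal_zmod_seven k ▸ hk)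
    obtain ⟨i, hi⟩ := (ZMod.intCast_zmod_eq_zero_iff_dvd _ 7).1 hk'
    exact ⟨i, by push_cast at hi ⊢; lia⟩
  have hsign (k : ℤ) :
      coeff (pentagonal (7 * k - 1)) (J 1) = (-1 : ℤ) * coeff (pentagonal k) (J 1) := by
    rw [coeff_pentagonal_J_one, coeff_pentagonal_J_one,
      show 7 * k - 1 = 2 * (3 * k - 1) + k + 1 by ring, Int.negOnePow_succ, Int.negOnePow_add,
      Int.negOnePow_two_mul, one_mul, Units.val_neg, neg_one_mul]
  rw [residuePart_eq_smul_X_pow_mul_expand (N := 49) (d := 2) (by norm_num) (by norm_num)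
    (by decide) (fun _ => coeff_J_one_eq_zero) hrange pentagonal_seven_mul_sub_one hsign,
    expand_J _ one_ne_zero, mul_one, smul_eq_C_mul, map_neg, map_one, neg_one_mul]

theorem X_sq_mul_J_mem_supportedMod : X ^ 2 * J 49 ∈ supportedMod (R := ℤ) (2 : ZMod 7) := by
  rw [← neg_neg (X ^ 2 * J 49), ← residuePart_two_J_one]
  exact neg_mem (residuePart_mem_supportedMod 2 (J 1))

theorem J_one_eq_residuePart_add : J 1 = residuePart (0 : ZMod 7) (J 1) +
    residuePart (1 : ZMod 7) (J 1) + residuePart (5 : ZMod 7) (J 1) - X ^ 2 * J 49 := by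
  have hsum := (Fin.sum_univ_seven fun r : ZMod 7 => residuePart r (J 1)).symm.trans
    (sum_residuePart (m := 7) (J 1))
  have h₂ : residuePart (2 : ZMod 7) (J 1) = -(X ^ 2 * J 49) := residuePart_two_J_one
  have h₃ : residuePart (3 : ZMod 7) (J 1) = 0 := residuePart_J_one_eq_zero (by decide)
  have h₄ : residuePart (4 : ZMod 7) (J 1) = 0 := residuePart_J_one_eq_zero (by decide)
  have h₆ : residuePart (6 : ZMod 7) (J 1) = 0 := residuePart_J_one_eq_zero (by decide)
  linear_combination -hsum + h₂ + h₃ + h₄ + h₆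

theorem two_mul_triangle (j : ℕ) : 2 * (j * (j + 1) / 2) = j * (j + 1) :=
  Nat.mul_div_cancel' (Nat.even_mul_succ_self j).two_dvd

theorem natCast_triangle_zmod_seven (j : ℕ) :
    ((j * (j + 1) / 2 : ℕ) : ZMod 7) = 4 * (j : ZMod 7) * (j + 1) := by
  have h := congrArg (Nat.cast (R := ZMod 7)) (two_mul_triangle j)
  rw [Nat.cast_mul] at h
  push_cast at h ⊢
  linear_combination 4 * h - ((j * (j + 1) / 2 : ℕ) : ZMod 7) * (by decide : (7 : ZMod 7) = 0)

theorem triangle_seven_mul_add_three (i : ℕ) :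
    (7 * i + 3) * (7 * i + 3 + 1) / 2 = 49 * (i * (i + 1) / 2) + 6 := by
  have h₁ := two_mul_triangle (7 * i + 3)
  have h₂ := two_mul_triangle i
  zify at *
  linarith

theorem residuePart_J_one_cube_eq_zero {r : ZMod 7} (hr : ∀ x : ZMod 7, 4 * x * (x + 1) ≠ r) :
    residuePart r (J 1 ^ 3) = 0 :=
  residuePart_eq_zero_of_forall_ne
    (fun _ hn => coeff_J_one_cube_eq_zero fun j hj => hn ⟨j, hj⟩)
    fun j => natCast_triangle_zmod_seven j ▸ hr j

theorem residuePart_six_J_one_cube :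
    residuePart (6 : ZMod 7) (J 1 ^ 3) = (-7 : ℤ) • (X ^ 2 * J 49) ^ 3 := by
  have hrange (j : ℕ) (hj : ((j * (j + 1) / 2 : ℕ) : ZMod 7) = 6) :
      j ∈ Set.range fun i : ℕ => 7 * i + 3 := by
    have hclass : ∀ x : ZMod 7, 4 * x * (x + 1) = 6 → x + 4 = 0 := by decide
    have hj' : ((j + 4 : ℕ) : ZMod 7) = 0 := by
      rw [Nat.cast_add, Nat.cast_ofNat]
      exact hclass _ (natCast_triangle_zmod_seven j ▸ hj)
    obtain ⟨i, hi⟩ := (ZMod.natCast_eq_zero_iff _ _).1 hj'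
    exact ⟨i - 1, by dsimp only; lia⟩
  have hfactor (i : ℕ) : coeff ((7 * i + 3) * (7 * i + 3 + 1) / 2) (J 1 ^ 3) =
      (-7 : ℤ) * coeff (i * (i + 1) / 2) (J 1 ^ 3) := by
    rw [coeff_triangle_J_one_cube, coeff_triangle_J_one_cube,
      show 7 * i + 3 = 2 * (3 * i + 1) + i + 1 by ring, pow_succ, pow_add, pow_mul]
    push_cast
    ring
  rw [residuePart_eq_smul_X_pow_mul_expand (N := 49) (d := 6) (by norm_num) (by norm_num)
    (by decide) (fun _ hn => coeff_J_one_cube_eq_zero fun j hj => hn ⟨j, hj⟩) hrange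
    triangle_seven_mul_add_three hfactor, map_pow, expand_J _ one_ne_zero, mul_one, mul_pow,
    ← pow_mul]
  rfl

/-- The four cubic relations satisfied by the parts of `J 1 = A + B + C - e` in the residue classes
`0`, `1`, `5` and `2` modulo `7`. They are permuted by `A → B → C → A`. -/
structure KleinRelations {R : Type*} [CommRing R] (A B C e : R) : Prop where
  prod : A * B * C + e ^ 3 = 0
  rel₁ : A * B ^ 2 - A ^ 2 * e + C * e ^ 2 = 0
  rel₂ : B * C ^ 2 - B ^ 2 * e + A * e ^ 2 = 0
  rel₃ : C * A ^ 2 - C ^ 2 * e + B * e ^ 2 = 0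

theorem residuePart_mul_mul {R : Type*} [CommRing R] {m : ℕ} {r s t c : ZMod m} {f g h : R⟦X⟧}
    (hf : f ∈ supportedMod r) (hg : g ∈ supportedMod s) (hh : h ∈ supportedMod t) :
    residuePart c (f * g * h) = if r + s + t = c then f * g * h else 0 :=
  residuePart_of_mem_supportedMod (SetLike.mul_mem_graded (SetLike.mul_mem_graded hf hg) hh)

theorem residuePart_cube {R : Type*} [CommRing R] {A B C e : R⟦X⟧}
    (hA : A ∈ supportedMod (0 : ZMod 7)) (hB : B ∈ supportedMod (1 : ZMod 7))
    (hC : C ∈ supportedMod (5 : ZMod 7)) (he : e ∈ supportedMod (2 : ZMod 7)) :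
    residuePart (2 : ZMod 7) ((A + B + C - e) ^ 3) = 3 * (A * B ^ 2 - A ^ 2 * e + C * e ^ 2) ∧
    residuePart (4 : ZMod 7) ((A + B + C - e) ^ 3) = 3 * (B * C ^ 2 - B ^ 2 * e + A * e ^ 2) ∧
    residuePart (5 : ZMod 7) ((A + B + C - e) ^ 3) = 3 * (C * A ^ 2 - C ^ 2 * e + B * e ^ 2) ∧
    residuePart (6 : ZMod 7) ((A + B + C - e) ^ 3) = 6 * (A * B * C) - e ^ 3 := by
  have hcube : (A + B + C - e) ^ 3 = A * A * A + B * B * B + C * C * C - e * e * e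
      + 3 • (A * A * B + A * A * C + B * B * A + B * B * C + C * C * A + C * C * B)
      + 3 • (A * e * e + B * e * e + C * e * e - A * A * e - B * B * e - C * C * e)
      + 6 • (A * B * C - A * B * e - A * C * e - B * C * e) := by ring
  rw [hcube]
  refine ⟨?_, ?_, ?_, ?_⟩ <;>
  · simp +decide only [map_add, map_sub, map_nsmul, residuePart_mul_mul hA hA hA,
      residuePart_mul_mul hB hB hB, residuePart_mul_mul hC hC hC, residuePart_mul_mul he he he,
      residuePart_mul_mul hA hA hB, residuePart_mul_mul hA hA hC, residuePart_mul_mul hB hB hA,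
      residuePart_mul_mul hB hB hC, residuePart_mul_mul hC hC hA, residuePart_mul_mul hC hC hB,
      residuePart_mul_mul hA he he, residuePart_mul_mul hB he he, residuePart_mul_mul hC he he,
      residuePart_mul_mul hA hA he, residuePart_mul_mul hB hB he, residuePart_mul_mul hC hC he,
      residuePart_mul_mul hA hB hC, residuePart_mul_mul hA hB he, residuePart_mul_mul hA hC he,
      residuePart_mul_mul hB hC he, if_true, if_false]
    ring

theorem kleinRelations_J_one : KleinRelations (residuePart (0 : ZMod 7) (J 1))
    (residuePart (1 : ZMod 7) (J 1)) (residuePart (5 : ZMod 7) (J 1)) (X ^ 2 * J 49) := by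
  obtain ⟨h₂, h₄, h₅, h₆⟩ := residuePart_cube (residuePart_mem_supportedMod 0 (J 1))
    (residuePart_mem_supportedMod 1 (J 1)) (residuePart_mem_supportedMod 5 (J 1))
    X_sq_mul_J_mem_supportedMod
  rw [← J_one_eq_residuePart_add] at h₂ h₄ h₅ h₆
  rw [residuePart_J_one_cube_eq_zero (by decide)] at h₂ h₄ h₅
  rw [residuePart_six_J_one_cube, zsmul_eq_mul] at h₆
  have three_ne_zero : (3 : ℤ⟦X⟧) ≠ 0 := fun h => by
    simpa [map_ofNat constantCoeff 3] using congrArg constantCoeff h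
  have six_ne_zero : (6 : ℤ⟦X⟧) ≠ 0 := fun h => by
    simpa [map_ofNat constantCoeff 6] using congrArg constantCoeff h
  exact {
    prod := mul_left_cancel₀ six_ne_zero (by push_cast at h₆; linear_combination -h₆)
    rel₁ := mul_left_cancel₀ three_ne_zero (by linear_combination -h₂)
    rel₂ := mul_left_cancel₀ three_ne_zero (by linear_combination -h₄)
    rel₃ := mul_left_cancel₀ three_ne_zero (by linear_combination -h₅) }

end Dissection

section Norm

variable {R : Type*} [CommRing R] {A B C e : R}

/-- The cyclic quartic in the residue parts of `J 1` that turns out to be `-(X * J 7 ^ 4)`. -/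
def kleinQuartic (A B C e : R) : R :=
  A ^ 3 * B + B ^ 3 * C + C ^ 3 * A + 8 * e ^ 4

/-- The image of `A + B + C - e` under `q ↦ z * q` for a seventh root of unity `z`, when `A`, `B`,
`C` and `e` are power series in `q` supported in the classes `0`, `1`, `5` and `2` modulo `7`. -/
def twist (A B C e z : R) : R :=
  A + z * B + z ^ 5 * C - z ^ 2 * e

/-- The coefficient of `1` in the product of `twist A B C e z` over `z = w, w ^ 2, w ^ 4`, written
in terms of `1` and the Gaussian period `w + w ^ 2 + w ^ 4`. -/
def twistTripleFst (A B C e : R) : R :=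
  A ^ 3 + B ^ 3 + C ^ 3 - e ^ 3 + 3 * A * B * C - (A * B ^ 2 + B * C ^ 2 + C * A ^ 2)
    + e * (A * B + B * C + C * A) - e ^ 2 * (A + B + C)

/-- The coefficient of the Gaussian period in the same product as in `twistTripleFst`. -/
def twistTripleSnd (A B C e : R) : R :=
  A ^ 2 * B + B ^ 2 * C + C ^ 2 * A - (A * B ^ 2 + B * C ^ 2 + C * A ^ 2) + A * B * C
    - e * (A ^ 2 + B ^ 2 + C ^ 2) - e ^ 2 * (A + B + C)

/-- The product of `twist A B C e z` over all seventh roots of unity `z`. -/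
def twistNorm (A B C e : R) : R :=
  (A + B + C - e) * (twistTripleFst A B C e ^ 2 - twistTripleFst A B C e * twistTripleSnd A B C e
    + 2 * twistTripleSnd A B C e ^ 2)

theorem twist_mul_twist_mul_twist {w : R}
    (hw : w ^ 6 + w ^ 5 + w ^ 4 + w ^ 3 + w ^ 2 + w + 1 = 0) :
    twist A B C e w * twist A B C e (w ^ 2) * twist A B C e (w ^ 4) =
      twistTripleFst A B C e + twistTripleSnd A B C e * (w + w ^ 2 + w ^ 4) := by
  unfold twist twistTripleFst twistTripleSnd
  grind

theorem prod_twist {w : R} (hw : w ^ 6 + w ^ 5 + w ^ 4 + w ^ 3 + w ^ 2 + w + 1 = 0) :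
    ∏ i ∈ range 7, twist A B C e (w ^ i) = twistNorm A B C e := by
  have hw_pow : w ^ 7 = 1 := by linear_combination (w - 1) * hw
  have hw_cube : (w ^ 3) ^ 6 + (w ^ 3) ^ 5 + (w ^ 3) ^ 4 + (w ^ 3) ^ 3 + (w ^ 3) ^ 2 + w ^ 3 + 1
      = 0 := by
    linear_combination
      (w ^ 12 - w ^ 11 + w ^ 9 - w ^ 8 + w ^ 6 - w ^ 4 + w ^ 3 - w + 1) * hw
  have hsquares := twist_mul_twist_mul_twist (A := A) (B := B) (C := C) (e := e) hw
  have hnonsquares := twist_mul_twist_mul_twist (A := A) (B := B) (C := C) (e := e) hw_cube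
  rw [show (w ^ 3) ^ 2 = w ^ 6 by ring,
    show (w ^ 3) ^ 4 = w ^ 5 by linear_combination w ^ 5 * hw_pow] at hnonsquares
  have hone : twist A B C e 1 = A + B + C - e := by unfold twist; ring
  have hperiods : (w + w ^ 2 + w ^ 4) * (w ^ 3 + w ^ 6 + w ^ 5) = 2 := by
    linear_combination (w ^ 4 + 2 * w - 2) * hw
  have hperiods_add : (w + w ^ 2 + w ^ 4) + (w ^ 3 + w ^ 6 + w ^ 5) = -1 := by
    linear_combination hw
  calc ∏ i ∈ range 7, twist A B C e (w ^ i)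
      = twist A B C e 1 * (twist A B C e w * twist A B C e (w ^ 2) * twist A B C e (w ^ 4)) *
          (twist A B C e (w ^ 3) * twist A B C e (w ^ 6) * twist A B C e (w ^ 5)) := by
        simp only [prod_range_succ, prod_range_zero, pow_zero, pow_one]
        ring
    _ = twistNorm A B C e := by
        rw [hone, hsquares, hnonsquares, twistNorm]
        generalize w + w ^ 2 + w ^ 4 = η at *
        generalize w ^ 3 + w ^ 6 + w ^ 5 = η' at *
        generalize twistTripleFst A B C e = p
        generalize twistTripleSnd A B C e = q
        linear_combination (A + B + C - e) * (p * q * hperiods_add + q ^ 2 * hperiods)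

namespace KleinRelations

theorem sum_mul_sq (h : KleinRelations A B C e) : A * B ^ 2 + B * C ^ 2 + C * A ^ 2 =
    e * ((A + B + C) ^ 2 - 2 * (A * B + B * C + C * A)) - e ^ 2 * (A + B + C) := by
  linear_combination h.rel₁ + h.rel₂ + h.rel₃

theorem curve (h : KleinRelations A B C e) : (A * B + B * C + C * A) ^ 2 =
    e * (A + B + C) ^ 3 - (A * B + B * C + C * A) * (3 * (A + B + C) * e + e ^ 2)
      - 2 * (A + B + C) * e ^ 3 - 3 * e ^ 4 := by
  linear_combination A * h.rel₁ + B * h.rel₂ + C * h.rel₃ + (2 * (A + B + C) + 3 * e) * h.prod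

theorem kleinQuartic_eq (h : KleinRelations A B C e) : kleinQuartic A B C e =
    (A * B + B * C + C * A) * ((A + B + C) ^ 2 + 5 * (A + B + C) * e + e ^ 2)
      - 2 * (A + B + C) ^ 3 * e + (A + B + C) ^ 2 * e ^ 2 + 4 * (A + B + C) * e ^ 3
      + 11 * e ^ 4 := by
  unfold kleinQuartic
  linear_combination -(A + B + C) * h.sum_mul_sq - h.curve - 2 * (A + B + C) * h.prod

theorem twistTripleFst_eq (h : KleinRelations A B C e) : twistTripleFst A B C e =
    (A + B + C) ^ 3 - 3 * (A + B + C) * (A * B + B * C + C * A) - (A + B + C) ^ 2 * e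
      + 3 * (A * B + B * C + C * A) * e - 7 * e ^ 3 := by
  unfold twistTripleFst
  linear_combination 6 * h.prod - h.sum_mul_sq

theorem twistTripleSnd_eq (h : KleinRelations A B C e) : twistTripleSnd A B C e =
    (A + B + C) * (A * B + B * C + C * A) + 2 * e ^ 3 - 3 * (A + B + C) ^ 2 * e
      + 6 * (A * B + B * C + C * A) * e + (A + B + C) * e ^ 2 := by
  unfold twistTripleSnd
  linear_combination -2 * h.sum_mul_sq - 2 * h.prod

theorem twistNorm_mul (h : KleinRelations A B C e) :
    twistNorm A B C e * e = kleinQuartic A B C e ^ 2 := by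
  rw [twistNorm, h.twistTripleFst_eq, h.twistTripleSnd_eq, h.kleinQuartic_eq]
  have hcurve := h.curve
  generalize A + B + C = σ₁ at *
  generalize A * B + B * C + C * A = σ₂ at *
  linear_combination (e * (σ₁ - e) * (14 * σ₁ ^ 2 + 21 * σ₁ * e + 63 * e ^ 2)
    - (σ₁ ^ 2 + 5 * σ₁ * e + e ^ 2) ^ 2) * hcurve

theorem kleinQuartic_sq (h : KleinRelations A B C e) {E : R} (hE : E = A + B + C - e) :
    kleinQuartic A B C e ^ 2 +
      kleinQuartic A B C e * (7 * E ^ 3 * e + 35 * E ^ 2 * e ^ 2 + 49 * E * e ^ 3) =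
    E ^ 7 * e + 7 * E ^ 6 * e ^ 2 + 21 * E ^ 5 * e ^ 3 + 49 * E ^ 4 * e ^ 4 + 147 * E ^ 3 * e ^ 5
      + 343 * E ^ 2 * e ^ 6 + 343 * E * e ^ 7 := by
  rw [h.kleinQuartic_eq, hE]
  have hcurve := h.curve
  generalize A + B + C = σ₁ at *
  generalize A * B + B * C + C * A = σ₂ at *
  linear_combination (σ₁ ^ 2 + 5 * σ₁ * e + e ^ 2) ^ 2 * hcurve

end KleinRelations

end Norm

section NormOfEulerProduct

theorem prod_range_mul_ite_dvd {M : Type*} [CommMonoid M] (g : ℕ → M) {p : ℕ}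
    (hp : p ≠ 0) (n : ℕ) :
    ∏ k ∈ range (p * n), (if p ∣ k + 1 then g (k + 1) else 1) =
      ∏ k ∈ range n, g (p * (k + 1)) := by
  induction n with
  | zero => rfl
  | succ n ih =>
    have hlast : p * n + (p - 1) + 1 = p * n + p := by lia
    rw [prod_range_succ, ← ih, Nat.mul_succ, prod_range_add]
    refine congrArg (_ * ·) ?_
    rw [prod_eq_single (p - 1), hlast,
      if_pos (Dvd.intro (n + 1) (Nat.mul_succ p n))]
    · intro i hi hne
      rw [mem_range] at hi
      refine if_neg fun hdvd => hne ?_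
      rw [add_assoc, Nat.dvd_add_right (dvd_mul_right ..)] at hdvd
      have := Nat.le_of_dvd i.succ_pos hdvd
      lia
    · exact fun h => absurd (mem_range.2 (by lia)) h

variable {R : Type*} [CommRing R] [IsDomain R] {ζ : R} {p : ℕ}

theorem prod_one_sub_pow_mul (hζ : IsPrimitiveRoot ζ p) (hp : 0 < p) (y : R) :
    ∏ i ∈ range p, (1 - ζ ^ i * y) = 1 - y ^ p := by
  have hfactor := hζ.pow_sub_pow_eq_prod_sub_mul 1 y hp
  rw [one_pow] at hfactor
  rw [hfactor]
  refine prod_nbij (ζ ^ ·) (fun i _ => ?_) (fun i hi j hj h => ?_) (fun z hz => ?_) fun _ _ => rfl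
  · rw [Polynomial.mem_nthRootsFinset hp, ← pow_mul, mul_comm, pow_mul, hζ.pow_eq_one, one_pow]
  · exact hζ.pow_inj (by simpa using hi) (by simpa using hj) h
  · rw [mem_coe, Polynomial.mem_nthRootsFinset hp] at hz
    have : NeZero p := ⟨hp.ne'⟩
    obtain ⟨i, hi, rfl⟩ := hζ.eq_pow_of_pow_eq_one hz
    exact ⟨i, by simpa using hi, rfl⟩

theorem prod_one_sub_pow_mul_pow (hζ : IsPrimitiveRoot ζ p) (hp : p.Prime) (x : R) (k : ℕ) :
    ∏ i ∈ range p, (1 - (ζ ^ i * x) ^ k) = if p ∣ k then (1 - x ^ k) ^ p else 1 - x ^ (p * k) := by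
  have hterm (i : ℕ) : (ζ ^ i * x) ^ k = (ζ ^ k) ^ i * x ^ k := by
    rw [mul_pow, ← pow_mul, ← pow_mul, mul_comm i]
  simp only [hterm]
  split_ifs with hk
  · simp [(hζ.pow_eq_one_iff_dvd k).2 hk]
  · rw [prod_one_sub_pow_mul (hζ.pow_of_coprime k ((hp.coprime_iff_not_dvd.2 hk).symm)) hp.pos,
      ← pow_mul, mul_comm k]

theorem prod_eulerProd_pow_mul (hζ : IsPrimitiveRoot ζ p) (hp : p.Prime) (x : R) (n : ℕ) :
    (∏ i ∈ range p, eulerProd (ζ ^ i * x) (p * n)) * eulerProd (x ^ (p * p)) n =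
      eulerProd (x ^ p) (p * n) * eulerProd (x ^ p) n ^ p := by
  have hleft : eulerProd (x ^ (p * p)) n =
      ∏ k ∈ range (p * n), (if p ∣ k + 1 then 1 - x ^ (p * (k + 1)) else 1) := by
    rw [prod_range_mul_ite_dvd (fun k => 1 - x ^ (p * k)) hp.ne_zero]
    simp only [eulerProd, ← pow_mul, mul_assoc]
  have hright : eulerProd (x ^ p) n ^ p =
      ∏ k ∈ range (p * n), (if p ∣ k + 1 then (1 - x ^ (k + 1)) ^ p else 1) := by
    rw [prod_range_mul_ite_dvd (fun k => (1 - x ^ k) ^ p) hp.ne_zero, prod_pow]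
    simp only [eulerProd, ← pow_mul]
  rw [hleft, hright]
  simp only [eulerProd]
  rw [prod_comm, ← prod_mul_distrib, ← prod_mul_distrib]
  refine prod_congr rfl fun k _ => ?_
  rw [prod_one_sub_pow_mul_pow hζ hp, ← pow_mul]
  split_ifs
  · exact mul_comm _ _
  · rfl

theorem prod_rescale_map_J_one (hζ : IsPrimitiveRoot ζ p) (hp : p.Prime) :
    (∏ i ∈ range p, rescale (ζ ^ i) (PowerSeries.map (Int.castRingHom R) (J 1))) *
      PowerSeries.map (Int.castRingHom R) (J (p * p)) =
    PowerSeries.map (Int.castRingHom R) (J p) ^ (p + 1) := by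
  have htrunc {b d n : ℕ} (hb : b ≠ 0) (h : d ≤ n) :
      PowerSeries.map (Int.castRingHom R) (J b) ≡ eulerProd ((X : R⟦X⟧) ^ b) n
        [SMOD Ideal.span {(X : R⟦X⟧) ^ d}] := by
    have := map_smodEq_X_pow (Int.castRingHom R) (eulerProd_X_pow_smodEq_J hb h)
    rw [map_eulerProd, map_pow, map_X] at this
    exact this.symm
  refine eq_of_forall_smodEq_X_pow fun d => ?_
  have hd : d ≤ p * d := Nat.le_mul_of_pos_left d hp.pos
  have hrescale (i : ℕ) : rescale (ζ ^ i) (PowerSeries.map (Int.castRingHom R) (J 1)) ≡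
      eulerProd (C ζ ^ i * X) (p * d) [SMOD Ideal.span {(X : R⟦X⟧) ^ d}] := by
    have := rescale_smodEq_X_pow (ζ ^ i) (htrunc one_ne_zero hd)
    rwa [map_eulerProd, pow_one, rescale_X, map_pow] at this
  have hfinite := prod_eulerProd_pow_mul (hζ.map_of_injective (C_injective (R := R))) hp X d
  calc _ ≡ (∏ i ∈ range p, eulerProd (C ζ ^ i * X) (p * d)) * eulerProd (X ^ (p * p)) d
          [SMOD Ideal.span {(X : R⟦X⟧) ^ d}] :=
        (SModEq.prod fun i _ => hrescale i).mul (htrunc (mul_ne_zero hp.ne_zero hp.ne_zero) le_rfl)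
    _ = eulerProd (X ^ p) (p * d) * eulerProd (X ^ p) d ^ p := hfinite
    _ ≡ _ [SMOD Ideal.span {(X : R⟦X⟧) ^ d}] := by
      rw [pow_succ']
      exact ((htrunc hp.ne_zero hd).mul ((htrunc hp.ne_zero le_rfl).pow p)).symm

end NormOfEulerProduct

section QuarticOfJ

theorem map_twistNorm {R S : Type*} [CommRing R] [CommRing S] (φ : R →+* S) (A B C e : R) :
    φ (twistNorm A B C e) = twistNorm (φ A) (φ B) (φ C) (φ e) := by
  simp only [twistNorm, twistTripleFst, twistTripleSnd, map_add, map_sub, map_mul, map_pow,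
    map_ofNat]

theorem rescale_eq_twist {R : Type*} [CommRing R] {A B C' e : R⟦X⟧}
    (hA : A ∈ supportedMod (0 : ZMod 7)) (hB : B ∈ supportedMod (1 : ZMod 7))
    (hC : C' ∈ supportedMod (5 : ZMod 7)) (he : e ∈ supportedMod (2 : ZMod 7)) {z : R}
    (hz : z ^ 7 = 1) : rescale z (A + B + C' - e) = twist A B C' e (C z) := by
  rw [map_sub, map_add, map_add, rescale_of_mem_supportedMod (r := 0) (mod_cast hA) hz,
    rescale_of_mem_supportedMod (r := 1) (mod_cast hB) hz,
    rescale_of_mem_supportedMod (r := 5) (mod_cast hC) hz,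
    rescale_of_mem_supportedMod (r := 2) (mod_cast he) hz, twist, pow_zero, pow_one, one_mul]

theorem geom_sum_seven_eq_zero {R : Type*} [CommRing R] [IsDomain R] {ζ : R}
    (hζ : IsPrimitiveRoot ζ 7) : ζ ^ 6 + ζ ^ 5 + ζ ^ 4 + ζ ^ 3 + ζ ^ 2 + ζ + 1 = 0 := by
  have hsum := hζ.geom_sum_eq_zero (by norm_num)
  simp only [sum_range_succ, sum_range_zero] at hsum
  linear_combination hsum

theorem twistNorm_mul_J {A B C' e : ℤ⟦X⟧} (hJ : J 1 = A + B + C' - e)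
    (hA : A ∈ supportedMod (0 : ZMod 7)) (hB : B ∈ supportedMod (1 : ZMod 7))
    (hC : C' ∈ supportedMod (5 : ZMod 7)) (he : e ∈ supportedMod (2 : ZMod 7)) :
    twistNorm A B C' e * J 49 = J 7 ^ 8 := by
  obtain ⟨ζ, hζ⟩ : ∃ ζ : ℂ, IsPrimitiveRoot ζ 7 := ⟨_, Complex.isPrimitiveRoot_exp 7 (by norm_num)⟩
  have hroot (i : ℕ) : (ζ ^ i) ^ 7 = 1 := by rw [← pow_mul, mul_comm, pow_mul, hζ.pow_eq_one,
    one_pow]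
  refine PowerSeries.map_injective (Int.castRingHom ℂ) Int.cast_injective ?_
  have hnorm := prod_rescale_map_J_one hζ (by norm_num)
  rw [map_mul, map_pow, map_twistNorm,
    ← prod_twist (geom_sum_seven_eq_zero (hζ.map_of_injective (C_injective (R := ℂ)))), ← hnorm]
  congr 1
  refine prod_congr rfl fun i _ => ?_
  rw [hJ, map_sub, map_add, map_add, rescale_eq_twist (map_mem_supportedMod _ hA)
    (map_mem_supportedMod _ hB) (map_mem_supportedMod _ hC) (map_mem_supportedMod _ he) (hroot i),
    map_pow]

theorem kleinQuartic_J_one_sq :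
    kleinQuartic (residuePart (0 : ZMod 7) (J 1)) (residuePart (1 : ZMod 7) (J 1))
      (residuePart (5 : ZMod 7) (J 1)) (X ^ 2 * J 49) ^ 2 = (X * J 7 ^ 4) ^ 2 := by
  have hnorm := twistNorm_mul_J J_one_eq_residuePart_add (residuePart_mem_supportedMod 0 (J 1))
    (residuePart_mem_supportedMod 1 (J 1)) (residuePart_mem_supportedMod 5 (J 1))
    X_sq_mul_J_mem_supportedMod
  rw [← kleinRelations_J_one.twistNorm_mul]
  linear_combination X ^ 2 * hnorm

theorem coeff_one_kleinQuartic_J_one :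
    coeff 1 (kleinQuartic (residuePart (0 : ZMod 7) (J 1)) (residuePart (1 : ZMod 7) (J 1))
      (residuePart (5 : ZMod 7) (J 1)) (X ^ 2 * J 49)) = -1 := by
  have hcoeff_zero : coeff 0 (J 1) = 1 := coeff_pentagonal_J_one 0
  have hcoeff_one : coeff 1 (J 1) = -1 := coeff_pentagonal_J_one 1
  have hA : residuePart (0 : ZMod 7) (J 1) ≡ 1 [SMOD Ideal.span {(X : ℤ⟦X⟧) ^ 2}] := by
    rw [smodEq_span_X_pow_iff]
    intro k hk
    interval_cases k <;> simp +decide [coeff_residuePart, hcoeff_zero, coeff_one]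
  have hB : residuePart (1 : ZMod 7) (J 1) ≡ -X [SMOD Ideal.span {(X : ℤ⟦X⟧) ^ 2}] := by
    rw [smodEq_span_X_pow_iff]
    intro k hk
    interval_cases k <;> simp +decide [coeff_residuePart, hcoeff_one]
  have hC : residuePart (5 : ZMod 7) (J 1) ≡ 0 [SMOD Ideal.span {(X : ℤ⟦X⟧) ^ 2}] := by
    rw [smodEq_span_X_pow_iff]
    intro k hk
    interval_cases k <;> simp +decide [coeff_residuePart]
  have he : X ^ 2 * J 49 ≡ 0 [SMOD Ideal.span {(X : ℤ⟦X⟧) ^ 2}] := by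
    rw [SModEq.zero, Ideal.mem_span_singleton]
    exact dvd_mul_right ..
  have hquartic := ((((hA.pow 3).mul hB).add ((hB.pow 3).mul hC)).add ((hC.pow 3).mul hA)).add
    ((SModEq.refl (8 : ℤ⟦X⟧)).mul (he.pow 4))
  rw [kleinQuartic, smodEq_span_X_pow_iff.1 hquartic 1 one_lt_two]
  simp

theorem kleinQuartic_J_one :
    kleinQuartic (residuePart (0 : ZMod 7) (J 1)) (residuePart (1 : ZMod 7) (J 1))
      (residuePart (5 : ZMod 7) (J 1)) (X ^ 2 * J 49) = -(X * J 7 ^ 4) := by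
  refine (sq_eq_sq_iff_eq_or_eq_neg.1 kleinQuartic_J_one_sq).resolve_left fun h => ?_
  have hcoeff : coeff 1 (X * J 7 ^ 4) = 1 := by
    rw [← zero_add 1, coeff_succ_X_mul, coeff_zero_eq_constantCoeff_apply, map_pow,
      constantCoeff_J (by norm_num), one_pow]
  have hsign := coeff_one_kleinQuartic_J_one
  rw [h, hcoeff] at hsign
  norm_num at hsign

end QuarticOfJ

section ModularEquation

/-- The monomial `t ^ (i + m) * s ^ (m + 1)` of the modular equation has coefficient
`modularCoeff i * 49 ^ m`. -/
def modularCoeff : ℕ → ℤ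
  | 0 => 1
  | 1 => 28
  | 2 => 322
  | 3 => 1904
  | 4 => 5915
  | 5 => 8624
  | 6 => 4018
  | _ => 0

/-- The pairs `(i, m)` indexing the monomials `t ^ (i + m) * s ^ (m + 1)` of the modular equation
other than the leading monomials `t ^ 7` and `s`. -/
def modularIndex : Finset (ℕ × ℕ) :=
  {j ∈ range 7 ×ˢ range 7 | 0 < j.1 + j.2 ∧ j.1 + j.2 < 7}

theorem seven_pow_dvd_modularCoeff (i : ℕ) : (7 : ℤ) ^ ((i + 3) / 4) ∣ modularCoeff i :=
  match i with
  | 0 | 1 | 2 | 3 | 4 | 5 | 6 => by decide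
  | _ + 7 => dvd_zero _

variable {R : Type*} [CommRing R] [IsDomain R]

-- With `F(e) = 0` the hypothesis `h`, the conclusion is `F(e)F(-e)F(ie)F(-ie) = 0`.
theorem resultant_cubic_quartic {a b c d r E e : R} (hE : E ≠ 0)
    (h : a * E ^ 3 + b * E ^ 2 * e + c * E * e ^ 2 + d * e ^ 3 = 0) (hr : e ^ 4 = r * E ^ 4) :
    (a ^ 2 + c ^ 2 * r - 2 * b * d * r) ^ 2 = r * (2 * a * c - b ^ 2 - d ^ 2 * r) ^ 2 := by
  have hquad : (a ^ 2 + c ^ 2 * r - 2 * b * d * r) * E ^ 2 =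
      -((2 * a * c - b ^ 2 - d ^ 2 * r) * e ^ 2) := by
    refine mul_left_cancel₀ (pow_ne_zero 4 hE) ?_
    linear_combination (a * E ^ 3 - b * E ^ 2 * e + c * E * e ^ 2 - d * e ^ 3) * h
      + (2 * b * d * E ^ 2 - c ^ 2 * E ^ 2 + d ^ 2 * e ^ 2) * hr
  refine mul_right_cancel₀ (pow_ne_zero 4 hE) ?_
  calc _ = ((a ^ 2 + c ^ 2 * r - 2 * b * d * r) * E ^ 2) ^ 2 := by ring
    _ = (2 * a * c - b ^ 2 - d ^ 2 * r) ^ 2 * e ^ 4 := by rw [hquad]; ring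
    _ = _ := by rw [hr]; ring

theorem modularEquation {t s E e Y : R} (ht : t ≠ 0) (hE : E ≠ 0)
    (hquad : Y ^ 2 + Y * (7 * E ^ 3 * e + 35 * E ^ 2 * e ^ 2 + 49 * E * e ^ 3) =
      E ^ 7 * e + 7 * E ^ 6 * e ^ 2 + 21 * E ^ 5 * e ^ 3 + 49 * E ^ 4 * e ^ 4 + 147 * E ^ 3 * e ^ 5
        + 343 * E ^ 2 * e ^ 6 + 343 * E * e ^ 7)
    (hY : Y = -(t * E ^ 4)) (hs : e ^ 4 = s * t * E ^ 4) :
    t ^ 7 = s + ∑ j ∈ modularIndex,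
      (modularCoeff j.1 * 49 ^ j.2 : ℤ) * (t ^ (j.1 + j.2) * s ^ (j.2 + 1)) := by
  have hcubic : (49 * (s * t) - t ^ 2) * E ^ 3 + (1 + 7 * t + 147 * (s * t)) * E ^ 2 * e
      + (7 + 35 * t + 343 * (s * t)) * E * e ^ 2 + (21 + 49 * t + 343 * (s * t)) * e ^ 3 = 0 := by
    refine mul_left_cancel₀ (pow_ne_zero 5 hE) ?_
    subst hY
    linear_combination -hquad - (49 * E ^ 4 + 147 * E ^ 3 * e
        + 343 * E ^ 2 * e ^ 2 + 343 * E * e ^ 3) * hs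
  have hresultant := resultant_cubic_quartic hE hcubic hs
  rw [modularIndex, sum_filter, sum_product]
  simp only [sum_range_succ, sum_range_zero, modularCoeff, Nat.reduceAdd, Nat.reduceLT, and_true,
    and_false, if_true, if_false]
  push_cast
  refine mul_left_cancel₀ ht ?_
  linear_combination hresultant

end ModularEquation

section LaurentOperators

variable {R : Type*} [CommRing R] {m : ℕ}

/-- The substitution `q ↦ q ^ m` on Laurent series, the analogue of `PowerSeries.expand`. -/
def laurentExpand (m : ℕ) (hm : m ≠ 0) : LaurentSeries R →+* LaurentSeries R :=
  HahnSeries.embDomainRingHom (AddMonoidHom.mulLeft (m : ℤ))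
    (mul_right_injective₀ (Int.natCast_ne_zero.mpr hm))
    fun _ _ => mul_le_mul_iff_right₀ (Int.natCast_pos.mpr (Nat.pos_of_ne_zero hm))

theorem coeff_laurentExpand_mul (hm : m ≠ 0) (f : LaurentSeries R) (n : ℤ) :
    (laurentExpand m hm f).coeff (m * n) = f.coeff n :=
  HahnSeries.embDomain_coeff (a := n)

theorem coeff_laurentExpand_of_not_dvd (hm : m ≠ 0) (f : LaurentSeries R) {n : ℤ}
    (hn : ¬ (m : ℤ) ∣ n) : (laurentExpand m hm f).coeff n = 0 :=
  HahnSeries.embDomain_of_notMem_range fun ⟨a, ha⟩ => hn ⟨a, ha.symm⟩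

theorem laurentExpand_ofPowerSeries (hm : m ≠ 0) (f : PowerSeries R) :
    laurentExpand m hm (HahnSeries.ofPowerSeries ℤ R f) =
      HahnSeries.ofPowerSeries ℤ R (expand m hm f) := by
  ext n
  by_cases hn : (m : ℤ) ∣ n
  · obtain ⟨a, rfl⟩ := hn
    have hm_pos : (0 : ℤ) < m := by positivity
    rw [coeff_laurentExpand_mul, PowerSeries.coeff_coe, PowerSeries.coeff_coe, Int.natAbs_mul,
      Int.natAbs_natCast, coeff_expand_mul]
    simp only [mul_neg_iff, hm_pos, hm_pos.not_gt, true_and, false_and, or_false]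
  · rw [coeff_laurentExpand_of_not_dvd hm _ hn, PowerSeries.coeff_coe,
      coeff_expand_of_not_dvd m hm _ (mt Int.natCast_dvd.mpr hn), ite_self]

theorem coeff_laurentExpand_mul_mul (hm : m ≠ 0) (f : LaurentSeries R) {g h : LaurentSeries R}
    (hgh : ∀ n : ℤ, h.coeff n = g.coeff (m * n)) (n : ℤ) :
    (laurentExpand m hm f * g).coeff (m * n) = (f * h).coeff n := by
  rw [HahnSeries.coeff_mul, HahnSeries.coeff_mul]
  symm
  refine sum_of_injOn (fun a : ℤ × ℤ => (m * a.1, m * a.2)) ?_ ?_ ?_ ?_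
  · rintro ⟨a, b⟩ - ⟨c, d⟩ - hac
    simpa [hm] using hac
  · rintro ⟨a, b⟩ hab
    simp only [mem_coe, Finset.mem_antidiagonal, HahnSeries.mem_support, hgh] at hab ⊢
    exact ⟨by rw [coeff_laurentExpand_mul]; exact hab.1, hab.2.1, by rw [← hab.2.2, mul_add]⟩
  · rintro ⟨a, b⟩ hab hnot
    by_cases ha : (m : ℤ) ∣ a
    · simp only [Finset.mem_antidiagonal, HahnSeries.mem_support] at hab
      obtain ⟨a, rfl⟩ := ha
      obtain ⟨b, rfl⟩ : (m : ℤ) ∣ b := (Int.dvd_add_right ⟨a, rfl⟩).mp ⟨n, hab.2.2⟩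
      refine absurd ⟨(a, b), ?_, rfl⟩ hnot
      rw [coeff_laurentExpand_mul, ← hgh, ← mul_add] at hab
      simp only [mem_coe, Finset.mem_antidiagonal, HahnSeries.mem_support]
      exact ⟨hab.1, hab.2.1, mul_left_cancel₀ (Int.natCast_ne_zero.mpr hm) hab.2.2⟩
    · rw [coeff_laurentExpand_of_not_dvd hm f ha, zero_mul]
  · rintro ⟨a, b⟩ -
    rw [coeff_laurentExpand_mul, hgh]

theorem exists_addMonoidHom_coe_eq {U : LaurentSeries R → LaurentSeries R}
    (hU : ∀ (f : LaurentSeries R) (n : ℤ), (U f).coeff n = f.coeff (m * n)) :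
    ∃ φ : LaurentSeries R →+ LaurentSeries R, ⇑φ = U :=
  ⟨AddMonoidHom.mk' U fun f g => by ext n; simp only [hU, HahnSeries.coeff_add], rfl⟩

theorem apply_laurentExpand_mul (hm : m ≠ 0) {U : LaurentSeries R → LaurentSeries R}
    (hU : ∀ (f : LaurentSeries R) (n : ℤ), (U f).coeff n = f.coeff (m * n))
    (f g : LaurentSeries R) : U (laurentExpand m hm f * g) = f * U g := by
  ext n
  rw [hU, coeff_laurentExpand_mul_mul hm f (hU g)]

end LaurentOperators

theorem laurentExpand_seven_mul_J_seven_pow {t : LaurentSeries ℤ}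
    (ht : t * HahnSeries.ofPowerSeries ℤ ℤ (J 1 ^ 4) =
      HahnSeries.ofPowerSeries ℤ ℤ (X * J 7 ^ 4)) :
    laurentExpand 7 (by decide) t * HahnSeries.ofPowerSeries ℤ ℤ (J 7 ^ 4) =
      HahnSeries.ofPowerSeries ℤ ℤ (X ^ 7 * J 49 ^ 4) := by
  have h := congrArg (laurentExpand 7 (by decide)) ht
  rwa [map_mul, laurentExpand_ofPowerSeries, laurentExpand_ofPowerSeries, map_mul,
    map_pow (expand 7 _), map_pow (expand 7 _), expand_X,
    expand_J _ one_ne_zero, expand_J _ (by decide)] at h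

theorem pow_seven_eq_laurentExpand_add_sum {t : LaurentSeries ℤ}
    (ht : t * HahnSeries.ofPowerSeries ℤ ℤ (J 1 ^ 4) =
      HahnSeries.ofPowerSeries ℤ ℤ (X * J 7 ^ 4)) :
    t ^ 7 = laurentExpand 7 (by decide) t + ∑ j ∈ modularIndex,
      (modularCoeff j.1 * 49 ^ j.2 : ℤ) *
        (t ^ (j.1 + j.2) * laurentExpand 7 (by decide) t ^ (j.2 + 1)) := by
  have hs := laurentExpand_seven_mul_J_seven_pow ht
  have hquad := congrArg (HahnSeries.ofPowerSeries ℤ ℤ)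
    (kleinRelations_J_one.kleinQuartic_sq J_one_eq_residuePart_add)
  have hY := congrArg (HahnSeries.ofPowerSeries ℤ ℤ) kleinQuartic_J_one
  have hE : HahnSeries.ofPowerSeries ℤ ℤ (J 1) ≠ 0 :=
    (map_ne_zero_iff _ HahnSeries.ofPowerSeries_injective).mpr (J_ne_zero one_ne_zero)
  have hXJ : HahnSeries.ofPowerSeries ℤ ℤ (X * J 7 ^ 4) ≠ 0 :=
    (map_ne_zero_iff _ HahnSeries.ofPowerSeries_injective).mpr
      (mul_ne_zero X_ne_zero (pow_ne_zero 4 (J_ne_zero (by decide))))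
  have ht0 : t ≠ 0 := left_ne_zero_of_mul (ht ▸ hXJ)
  simp only [map_add, map_mul, map_pow, map_neg, map_ofNat] at ht hs hquad hY
  refine modularEquation ht0 hE hquad (hY.trans ?_) ?_
  · rw [ht]
  · linear_combination
      -laurentExpand 7 (by decide) t * ht - HahnSeries.ofPowerSeries ℤ ℤ X * hs

theorem hasForm_iff {p : ℤ →₀ ℤ} {k γ : ℤ} : HasForm p k γ ↔
    ∀ n : ℤ, ∃ c : ℤ, (p n : ℚ) = c * 7 ^ ((7 * n - k + γ) / 4) := by
  have hfloor (a : ℤ) : ⌊(a : ℚ) / 4⌋ = a / 4 := mod_cast Rat.floor_intCast_div_natCast a 4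
  simp only [HasForm, hfloor]

theorem HasForm.zero {k γ : ℤ} : HasForm 0 k γ :=
  fun n => ⟨0, by simp⟩

theorem HasForm.add {p r : ℤ →₀ ℤ} {k γ : ℤ} (hp : HasForm p k γ) (hr : HasForm r k γ) :
    HasForm (p + r) k γ := fun n => by
  obtain ⟨c, hc⟩ := hp n
  obtain ⟨d, hd⟩ := hr n
  exact ⟨c + d, by rw [Finsupp.add_apply, Int.cast_add, Int.cast_add, hc, hd, add_mul]⟩

theorem HasForm.neg {p : ℤ →₀ ℤ} {k γ : ℤ} (hp : HasForm p k γ) : HasForm (-p) k γ := fun n => by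
  obtain ⟨c, hc⟩ := hp n
  exact ⟨-c, by rw [Finsupp.neg_apply, Int.cast_neg, Int.cast_neg, hc, neg_mul]⟩

theorem HasForm.smul_shift {p : ℤ →₀ ℤ} {k γ : ℤ} (hp : HasForm p k γ) {k' l c : ℤ} {e : ℕ}
    (hc : 7 ^ e ∣ c) (he : 7 * l + k ≤ k' + 4 * e) :
    HasForm (c • p.equivMapDomain (Equiv.addRight l)) k' γ := by
  rw [hasForm_iff] at hp ⊢
  intro n
  obtain ⟨a, ha⟩ := hp (n - l)
  obtain ⟨b, rfl⟩ := hc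
  obtain ⟨d, hd⟩ : ∃ d : ℕ, (7 * n - k' + γ) / 4 + d = e + (7 * (n - l) - k + γ) / 4 :=
    Int.le.dest (by omega)
  have hpow : (7 : ℚ) ^ e * 7 ^ ((7 * (n - l) - k + γ) / 4) =
      7 ^ ((7 * n - k' + γ) / 4) * 7 ^ d := by
    rw [← zpow_natCast, ← zpow_natCast, ← zpow_add₀ (by norm_num), ← zpow_add₀ (by norm_num), hd]
  refine ⟨b * a * 7 ^ d, ?_⟩
  have hshift : p.equivMapDomain (Equiv.addRight l) n = p (n - l) := by
    simp [Finsupp.equivMapDomain_apply, sub_eq_add_neg]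
  rw [Finsupp.smul_apply, hshift, smul_eq_mul]
  push_cast
  linear_combination (7 : ℚ) ^ e * b * ha + b * a * hpow

section Evaluation

variable {T : (LaurentSeries ℤ)ˣ}

theorem evalT_eq_linearCombination (p : ℤ →₀ ℤ) :
    evalT T p = Finsupp.linearCombination ℤ (fun n : ℤ => ↑(T ^ n)) p :=
  rfl

theorem evalT_smul_shift (p : ℤ →₀ ℤ) (l c : ℤ) :
    evalT T (c • p.equivMapDomain (Equiv.addRight l)) = c * (↑(T ^ l) * evalT T p) := by
  rw [evalT_eq_linearCombination, map_smul, Finsupp.linearCombination_equivMapDomain, zsmul_eq_mul,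
    evalT, Finsupp.linearCombination_apply, Finsupp.mul_sum, Finsupp.mul_sum, Finsupp.mul_sum]
  refine Finsupp.sum_congr fun n _ => ?_
  rw [Function.comp_apply, Equiv.coe_addRight, zpow_add, Units.val_mul, zsmul_eq_mul, zsmul_eq_mul]
  ring

end Evaluation

section Weight

variable {ι : Type*} [Fintype ι] {T : (LaurentSeries ℤ)ˣ} {v : ι → LaurentSeries ℤ} {γ : ι → ℤ}

variable (T v γ) in
/-- The Laurent series `∑ i, v i * p i (T)` for Laurent polynomials `p i` satisfying the `7`-adic
divisibility conditions of index `k`. -/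
def weightSubgroup (k : ℤ) : AddSubgroup (LaurentSeries ℤ) where
  carrier := {x | ∃ p : ι → ℤ →₀ ℤ,
    x = ∑ i, v i * evalT T (p i) ∧ ∀ i, HasForm (p i) k (γ i)}
  zero_mem' := ⟨0, by simp [evalT], fun _ => HasForm.zero⟩
  add_mem' := by
    rintro _ _ ⟨p, rfl, hp⟩ ⟨r, rfl, hr⟩
    exact ⟨p + r, by simp [evalT_eq_linearCombination, mul_add, sum_add_distrib],
      fun i => (hp i).add (hr i)⟩
  neg_mem' := by
    rintro _ ⟨p, rfl, hp⟩
    exact ⟨-p, by simp [evalT_eq_linearCombination], fun i => (hp i).neg⟩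

theorem mem_weightSubgroup {x : LaurentSeries ℤ} {k : ℤ} :
    x ∈ weightSubgroup T v γ k ↔
      ∃ p : ι → ℤ →₀ ℤ, x = ∑ i, v i * evalT T (p i) ∧ ∀ i, HasForm (p i) k (γ i) :=
  Iff.rfl

theorem intCast_mul_zpow_mul_mem_weightSubgroup {x : LaurentSeries ℤ} {k k' l c : ℤ} {e : ℕ}
    (hx : x ∈ weightSubgroup T v γ k) (hc : 7 ^ e ∣ c) (he : 7 * l + k ≤ k' + 4 * e) :
    c * (↑(T ^ l) * x) ∈ weightSubgroup T v γ k' := by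
  obtain ⟨p, rfl, hp⟩ := hx
  refine ⟨fun i => c • (p i).equivMapDomain (Equiv.addRight l), ?_,
    fun i => (hp i).smul_shift hc he⟩
  simp only [evalT_smul_shift, mul_sum]
  exact sum_congr rfl fun i _ => by ring

theorem unit_mul_mem_weightSubgroup_add_seven {x : LaurentSeries ℤ} {k : ℤ} :
    T * x ∈ weightSubgroup T v γ (k + 7) ↔ x ∈ weightSubgroup T v γ k := by
  constructor <;> intro h
  · simpa using intCast_mul_zpow_mul_mem_weightSubgroup (k' := k) (l := -1) (c := 1) (e := 0) h
      (by simp) (by omega)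
  · simpa using intCast_mul_zpow_mul_mem_weightSubgroup (k' := k + 7) (l := 1) (c := 1) (e := 0) h
      (by simp) (by omega)

end Weight

theorem forall_int_of_window {P : ℤ → Prop} {d l : ℤ}
    (up : ∀ k, (∀ j, k ≤ j → j < k + d → P j) → P (k + d))
    (down : ∀ k, (∀ j, k < j → j ≤ k + d → P j) → P k)
    (base : ∀ j, l ≤ j → j < l + d → P j) (k : ℤ) : P k := by
  have hwindow (k : ℤ) : ∀ j, k ≤ j → j < k + d → P j := by
    induction k using Int.inductionOn' (b := l) with
    | zero => exact base
    | succ k _ ih =>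
      intro j hkj hjk
      rcases (show j ≤ k + d by omega).lt_or_eq with hlt | rfl
      · exact ih j (by omega) hlt
      · exact up k ih
    | pred k _ ih =>
      intro j hkj hjk
      rcases hkj.eq_or_lt with rfl | hlt
      · exact down _ fun i hi hid => ih i (by omega) (by omega)
      · exact ih j (by omega) (by omega)
  simpa using up (k - d) (hwindow (k - d))

section Recurrence

variable {T : (LaurentSeries ℤ)ˣ}

theorem zpow_add_seven_eq
    (hT : (T : LaurentSeries ℤ) * HahnSeries.ofPowerSeries ℤ ℤ (J 1 ^ 4) =
      HahnSeries.ofPowerSeries ℤ ℤ (X * J 7 ^ 4)) (k : ℤ) :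
    (↑(T ^ (k + 7)) : LaurentSeries ℤ) =
      laurentExpand 7 (by decide) (T : LaurentSeries ℤ) * ↑(T ^ k) + ∑ j ∈ modularIndex,
        (modularCoeff j.1 * 49 ^ j.2 : ℤ) * (laurentExpand 7 (by decide)
          (T ^ (j.2 + 1) : LaurentSeries ℤ) * ↑(T ^ (k + (j.1 + j.2)))) := by
  have hadd (i m : ℕ) : T ^ (k + (i + m)) = T ^ k * T ^ (i + m) := by
    rw [zpow_add, ← Nat.cast_add, zpow_natCast]
  have hseven : T ^ (k + 7) = T ^ k * T ^ 7 := zpow_add T k 7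
  simp only [hadd, hseven, Units.val_mul, Units.val_pow_eq_pow_val, map_pow]
  rw [pow_seven_eq_laurentExpand_add_sum hT, mul_add, mul_sum]
  exact congrArg₂ (· + ·) (mul_comm _ _) (sum_congr rfl fun j _ => by ring)

theorem apply_mul_zpow_add_seven
    (hT : (T : LaurentSeries ℤ) * HahnSeries.ofPowerSeries ℤ ℤ (J 1 ^ 4) =
      HahnSeries.ofPowerSeries ℤ ℤ (X * J 7 ^ 4))
    {U : LaurentSeries ℤ → LaurentSeries ℤ}
    (hU : ∀ (f : LaurentSeries ℤ) (n : ℤ), (U f).coeff n = f.coeff (7 * n))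
    (u : LaurentSeries ℤ) (k : ℤ) :
    U (u * ↑(T ^ (k + 7))) = T * U (u * ↑(T ^ k)) + ∑ j ∈ modularIndex,
      (modularCoeff j.1 * 49 ^ j.2 : ℤ) *
        (↑(T ^ (j.2 + 1 : ℤ)) * U (u * ↑(T ^ (k + (j.1 + j.2))))) := by
  obtain ⟨φ, rfl⟩ := exists_addMonoidHom_coe_eq (m := 7) hU
  have hφ (f g : LaurentSeries ℤ) :
      φ (u * (laurentExpand 7 (by decide) f * g)) = f * φ (u * g) := by
    rw [mul_left_comm, apply_laurentExpand_mul _ hU]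
  rw [zpow_add_seven_eq hT, mul_add, mul_sum, map_add, map_sum, hφ]
  refine congrArg (_ + ·) (sum_congr rfl fun j _ => ?_)
  rw [mul_left_comm, ← zsmul_eq_mul, map_zsmul, hφ, zsmul_eq_mul]
  norm_cast

variable {ι : Type*} [Fintype ι] {v : ι → LaurentSeries ℤ} {γ : ι → ℤ}

theorem sum_modularIndex_mem_weightSubgroup {x : ℤ → LaurentSeries ℤ} {k : ℤ}
    (hx : ∀ j, k < j → j < k + 7 → x j ∈ weightSubgroup T v γ j) :
    ∑ j ∈ modularIndex, (modularCoeff j.1 * 49 ^ j.2 : ℤ) *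
      (↑(T ^ (j.2 + 1 : ℤ)) * x (k + (j.1 + j.2))) ∈ weightSubgroup T v γ (k + 7) := by
  refine sum_mem fun ⟨i, m⟩ hj => ?_
  have hpos : 0 < i + m ∧ i + m < 7 := (mem_filter.mp hj).2
  have hdvd : (7 : ℤ) ^ ((i + 3) / 4 + 2 * m) ∣ modularCoeff i * 49 ^ m := by
    rw [pow_add, pow_mul]
    exact mul_dvd_mul_right (seven_pow_dvd_modularCoeff i) _
  exact intCast_mul_zpow_mul_mem_weightSubgroup (hx _ (by omega) (by omega)) hdvd (by omega)

theorem mem_weightSubgroup_add_seven_iff {x : ℤ → LaurentSeries ℤ} {k : ℤ}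
    (hrec : x (k + 7) = T * x k + ∑ j ∈ modularIndex, (modularCoeff j.1 * 49 ^ j.2 : ℤ) *
      (↑(T ^ (j.2 + 1 : ℤ)) * x (k + (j.1 + j.2))))
    (hx : ∀ j, k < j → j < k + 7 → x j ∈ weightSubgroup T v γ j) :
    x (k + 7) ∈ weightSubgroup T v γ (k + 7) ↔ x k ∈ weightSubgroup T v γ k := by
  rw [hrec, AddSubgroup.add_mem_cancel_right _ (sum_modularIndex_mem_weightSubgroup hx),
    unit_mul_mem_weightSubgroup_add_seven]

end Recurrence

theorem stmt7_general {ι : Type*} [Fintype ι]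
    (T : (LaurentSeries ℤ)ˣ)
    (hT : (T : LaurentSeries ℤ) * HahnSeries.ofPowerSeries ℤ ℤ ((J 1) ^ 4)
        = HahnSeries.ofPowerSeries ℤ ℤ (PowerSeries.X * (J 7) ^ 4))
    (U : LaurentSeries ℤ → LaurentSeries ℤ)
    (hU : ∀ (f : LaurentSeries ℤ) (n : ℤ), (U f).coeff n = f.coeff (7 * n))
    (u : LaurentSeries ℤ) (v : ι → LaurentSeries ℤ) (l : ℤ) (γ : ι → ℤ)
    (h : ∀ k : ℤ, l ≤ k → k ≤ l + 6 →
      ∃ p : ι → ℤ →₀ ℤ, U (u * ↑(T ^ k)) = ∑ i, v i * evalT T (p i) ∧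
        ∀ i, HasForm (p i) k (γ i)) (k : ℤ) :
    ∃ p : ι → ℤ →₀ ℤ, U (u * ↑(T ^ k)) = ∑ i, v i * evalT T (p i) ∧
      ∀ i, HasForm (p i) k (γ i) := by
  simp only [← mem_weightSubgroup] at h ⊢
  have hrec (k : ℤ) := apply_mul_zpow_add_seven hT hU u k
  exact forall_int_of_window (P := fun k => U (u * ↑(T ^ k)) ∈ weightSubgroup T v γ k) (d := 7)
    (fun k hk => (mem_weightSubgroup_add_seven_iff (hrec k)
      fun j hkj hjk => hk j hkj.le hjk).mpr (hk k le_rfl (by omega)))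
    (fun k hk => (mem_weightSubgroup_add_seven_iff (hrec k)
      fun j hkj hjk => hk j hkj hjk.le).mp (hk (k + 7) (by omega) le_rfl))
    (fun k hlk hkl => h k hlk (by omega)) k

/-- Lemma on 7-adic weights: if for `l ≤ k ≤ l+6` there are Laurent
polynomials `p_k^{(i)} ∈ ℤ[x,x⁻¹]` of the form `∑_n c_i(k,n)·7^{⌊(7n−k+γ_i)/4⌋}·x^n` with
`U_7(u·t^k) = v₁·p_k^{(1)}(t) + v₂·p_k^{(2)}(t) + v₃·p_k^{(3)}(t)`, then such Laurent
polynomials of the same form exist for every `k : ℤ`. Here `t = q·J_7^4/J_1^4` and `U_7`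
is the operator `∑ f(n) qⁿ ↦ ∑ f(7n) qⁿ`. -/
theorem stmt7
    (T : (LaurentSeries ℤ)ˣ)
    (hT : (T : LaurentSeries ℤ) * HahnSeries.ofPowerSeries ℤ ℤ ((J 1) ^ 4)
        = HahnSeries.ofPowerSeries ℤ ℤ (PowerSeries.X * (J 7) ^ 4))
    (U : LaurentSeries ℤ → LaurentSeries ℤ)
    (hU : ∀ (f : LaurentSeries ℤ) (n : ℤ), (U f).coeff n = f.coeff (7 * n))
    (u v₁ v₂ v₃ : LaurentSeries ℤ) (l γ₁ γ₂ γ₃ : ℤ)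
    (h : ∀ k : ℤ, l ≤ k → k ≤ l + 6 →
      ∃ p₁ p₂ p₃ : ℤ →₀ ℤ,
        U (u * ↑(T ^ k)) = v₁ * evalT T p₁ + v₂ * evalT T p₂ + v₃ * evalT T p₃ ∧
        HasForm p₁ k γ₁ ∧ HasForm p₂ k γ₂ ∧ HasForm p₃ k γ₃) :
    ∀ k : ℤ,
      ∃ p₁ p₂ p₃ : ℤ →₀ ℤ,
        U (u * ↑(T ^ k)) = v₁ * evalT T p₁ + v₂ * evalT T p₂ + v₃ * evalT T p₃ ∧
        HasForm p₁ k γ₁ ∧ HasForm p₂ k γ₂ ∧ HasForm p₃ k γ₃ := by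
  simpa [Fin.exists_fin_succ_pi, Fin.sum_univ_three, Fin.forall_fin_succ] using
    stmt7_general T hT U hU u ![v₁, v₂, v₃] l ![γ₁, γ₂, γ₃]
      (by simpa [Fin.exists_fin_succ_pi, Fin.sum_univ_three, Fin.forall_fin_succ] using h)
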